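/- Let K ≥ 2, τ > 0, and β ∈ ℝ^K with all β_i > 0, let f(x) = (K−1)! τ^{K−1} (∑_{j=1}^K β_j/x_j^τ)^{−K} ∏_{i=1}^K β_i/x_i^{τ+1} be the Concrete density on S_K, and write k(x) = ∑_{j=1}^K β_j/x_j^τ. Then for all indices i, j, the β–β component of the Fisher information in score form satisfies ∫_{S_K} f(x) (1/β_i − K/(k(x) x_i^τ))(1/β_j − K/(k(x) x_j^τ)) d^{K−1}x = (K δ_{ij} − 1)/((K+1) β_i β_j), where δ is the Kronecker delta. (The factors are the score functions ∂ log f/∂β_i; this is the coefficient of dβ_i dβ_j in the information metric of the Concrete distribution.) -/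

import Mathlib

open MeasureTheory Finset

noncomputable def fillMap (K : ℕ) (u : Fin (K - 1) → ℝ) : Fin K → ℝ :=
  fun i => if h : (i : ℕ) < K - 1 then u ⟨i, h⟩ else 1 - ∑ j, u j

/-- The `(K-1)`-dimensional Lebesgue measure on the probability simplex `S_K`. -/
noncomputable def simplexMeasure (K : ℕ) : Measure (Fin K → ℝ) :=
  Measure.map (fillMap K)
    (volume.restrict {u : Fin (K - 1) → ℝ | (∀ j, 0 ≤ u j) ∧ ∑ j, u j ≤ 1})

/-- The density of the Concrete distribution `C(β, τ)` on the simplex. -/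
noncomputable def concreteDensity (K : ℕ) (β : Fin K → ℝ) (τ : ℝ) (x : Fin K → ℝ) : ℝ :=
  (Nat.factorial (K - 1) : ℝ) * τ ^ (K - 1) * (∑ j, β j / x j ^ τ) ^ (-(K : ℝ)) *
    ∏ i, β i / x i ^ (τ + 1)

/-- `k(x) = ∑_j β_j/x_j^τ`. -/
noncomputable def kfun (K : ℕ) (β : Fin K → ℝ) (τ : ℝ) (x : Fin K → ℝ) : ℝ :=
  ∑ j, β j / x j ^ τ

/-- Kronecker delta. -/
def kd {K : ℕ} (a b : Fin K) : ℝ := if a = b then 1 else 0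

lemma oneD (τ : ℝ) (hτ : 0 < τ) (c : ℝ) (hc : 0 < c) (m : ℕ) :
    ∫ y in Set.Ioi (0:ℝ), c / y ^ (τ + 1) * Real.exp (-(c / y ^ τ)) * (c / y ^ τ) ^ m
      = (m.factorial : ℝ) / τ := by
  have h1 := integral_comp_rpow_Ioi
    (fun z : ℝ => c ^ (m+1) / τ * (z ^ (((m:ℝ) + 1) - 1) * Real.exp (-(c * z)))) (p := -τ) (by linarith)
  rw [integral_const_mul, Real.integral_rpow_mul_exp_neg_mul_Ioi (by positivity) hc,
    Real.Gamma_nat_eq_factorial] at h1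
  have h2 : c ^ (m+1) / τ * ((1 / c) ^ ((m:ℝ)+1) * (m.factorial : ℝ)) = (m.factorial : ℝ) / τ := by
    have : (1 / c) ^ ((m:ℝ)+1) = (1/c)^(m+1) := by
      rw [← Real.rpow_natCast]; push_cast; rfl
    have h3 : c ^ (m+1) * (1 / c) ^ (m+1) = 1 := by
      rw [← mul_pow, mul_one_div_cancel hc.ne', one_pow]
    rw [this]
    calc _ = (c ^ (m+1) * (1 / c) ^ (m+1)) * ((m.factorial : ℝ) / τ) := by ring
      _ = _ := by rw [h3, one_mul]
  rw [← h2, ← h1]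
  refine setIntegral_congr_fun measurableSet_Ioi (fun y hy => ?_)
  have hy : 0 < y := hy
  have e1 : y ^ (-τ - 1) = (y ^ (τ+1))⁻¹ := by
    rw [← Real.rpow_neg hy.le]; ring_nf
  have e2 : y ^ (-τ) = (y ^ τ)⁻¹ := Real.rpow_neg hy.le _
  have hp : 0 < y ^ τ := Real.rpow_pos_of_pos hy _
  have hp1 : 0 < y ^ (τ+1) := Real.rpow_pos_of_pos hy _
  simp only [smul_eq_mul, abs_neg, abs_of_pos hτ, e1, e2, add_sub_cancel_right, Real.rpow_natCast,
    div_eq_mul_inv, mul_pow]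
  field_simp
  ring

lemma oneD_lint (τ : ℝ) (hτ : 0 < τ) (c : ℝ) (hc : 0 < c) (m : ℕ) :
    ∫⁻ y in Set.Ioi (0:ℝ), ENNReal.ofReal
      (c / y ^ (τ + 1) * Real.exp (-(c / y ^ τ)) * (c / y ^ τ) ^ m)
      = ENNReal.ofReal ((m.factorial : ℝ) / τ) := by
  rw [← oneD τ hτ c hc m, ofReal_integral_eq_lintegral_ofReal]
  · refine MeasureTheory.Integrable.of_integral_ne_zero ?_
    rw [oneD τ hτ c hc m]; positivity
  · filter_upwards [ae_restrict_mem measurableSet_Ioi] with y hy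
    have hy : 0 < y := hy
    simp only [Pi.zero_apply]; positivity

lemma prodD_lint (K : ℕ) (τ : ℝ) (hτ : 0 < τ) (β : Fin K → ℝ) (hβ : ∀ i, 0 < β i) (m : Fin K → ℕ) :
    ∫⁻ y in {y : Fin K → ℝ | ∀ i, 0 < y i}, ENNReal.ofReal
      (∏ i, (β i / y i ^ (τ + 1) * Real.exp (-(β i / y i ^ τ)) * (β i / y i ^ τ) ^ (m i)))
      = ENNReal.ofReal (∏ i, (((m i).factorial : ℝ) / τ)) := by
  have hset : {y : Fin K → ℝ | ∀ i, 0 < y i} = Set.univ.pi (fun _ => Set.Ioi (0:ℝ)) := by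
    ext; simp
  have hm : MeasurableSet {y : Fin K → ℝ | ∀ i, 0 < y i} := by
    rw [hset]; exact MeasurableSet.univ_pi (fun _ => measurableSet_Ioi)
  rw [← ofReal_integral_eq_lintegral_ofReal]
  · congr 1
    rw [hset, volume_pi, Measure.restrict_pi_pi,
      integral_fintype_prod_eq_prod (fun i t => β i / t ^ (τ + 1) * Real.exp (-(β i / t ^ τ)) * (β i / t ^ τ) ^ (m i))]
    exact Finset.prod_congr rfl (fun i _ => oneD τ hτ _ (hβ i) _)
  · rw [hset, volume_pi, Measure.restrict_pi_pi]
    refine MeasureTheory.Integrable.fintype_prod (f := fun i t => β i / t ^ (τ + 1) * Real.exp (-(β i / t ^ τ)) * (β i / t ^ τ) ^ (m i)) (fun i => ?_)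
    refine MeasureTheory.Integrable.of_integral_ne_zero ?_
    rw [oneD τ hτ _ (hβ i) _]; positivity
  · filter_upwards [ae_restrict_mem hm] with y hy
    have hy : ∀ i, 0 < y i := hy
    refine Finset.prod_nonneg (fun i _ => ?_)
    have := hy i
    have := hβ i
    positivity

lemma fill_apply_castSucc (n : ℕ) (u : Fin n → ℝ) (i : Fin n) :
    fillMap (n+1) u i.castSucc = u i := by
  simp [fillMap]

lemma fill_apply_last (n : ℕ) (u : Fin n → ℝ) :
    fillMap (n+1) u (Fin.last n) = 1 - ∑ j, u j := by
  simp [fillMap]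

lemma fill_measurable (n : ℕ) : Measurable (fun u : Fin n → ℝ => fillMap (n+1) u) := by
  refine measurable_pi_iff.2 (fun i => ?_)
  refine Fin.lastCases ?_ (fun i => ?_) i
  · simp only [fill_apply_last]; fun_prop
  · simp only [fill_apply_castSucc]; fun_prop

lemma lint_scale (n : ℕ) (s : ℝ) (hs : 0 < s) (G : (Fin n → ℝ) → ENNReal) :
    ∫⁻ v, G v = ENNReal.ofReal (s ^ n) * ∫⁻ u, G (s • u) := by
  have h := Measure.map_addHaar_smul (volume : Measure (Fin n → ℝ)) hs.ne'
  have e : ∫⁻ u, G (s • u) = ∫⁻ v, G v ∂(Measure.map (fun x => s • x) volume) :=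
    ((Homeomorph.smulOfNeZero s hs.ne').toMeasurableEquiv.measurableEmbedding.lintegral_map G).symm
  rw [e, h, lintegral_smul_measure, smul_eq_mul, ← mul_assoc, ← ENNReal.ofReal_mul (by positivity)]
  simp [abs_of_pos, hs, hs.ne']

lemma polar (n : ℕ) (F : (Fin (n+1) → ℝ) → ENNReal) (hF : Measurable F) :
    ∫⁻ y in {y : Fin (n+1) → ℝ | ∀ i, 0 < y i}, F y
      = ∫⁻ u in {u : Fin n → ℝ | (∀ j, 0 < u j) ∧ ∑ j, u j < 1},
          ∫⁻ r in Set.Ioi (0:ℝ), ENNReal.ofReal (r ^ n) * F (r • fillMap (n+1) u) := by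
  have hm : MeasurableSet {y : Fin (n+1) → ℝ | ∀ i, 0 < y i} := by
    have hset : {y : Fin (n+1) → ℝ | ∀ i, 0 < y i} = Set.univ.pi (fun _ => Set.Ioi (0:ℝ)) := by
      ext; simp
    rw [hset]; exact MeasurableSet.univ_pi (fun _ => measurableSet_Ioi)
  have hmn : MeasurableSet {u : Fin n → ℝ | (∀ j, 0 < u j) ∧ ∑ j, u j < 1} := by
    refine MeasurableSet.inter (s₁ := {u : Fin n → ℝ | ∀ j, 0 < u j}) (s₂ := {u : Fin n → ℝ | ∑ j, u j < 1}) ?_ ?_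
    · have hset : {y : Fin n → ℝ | ∀ i, 0 < y i} = Set.univ.pi (fun _ => Set.Ioi (0:ℝ)) := by
        ext; simp
      rw [hset]; exact MeasurableSet.univ_pi (fun _ => measurableSet_Ioi)
    · exact measurableSet_lt (by fun_prop) measurable_const
  set P := {y : Fin (n+1) → ℝ | ∀ i, 0 < y i} with hP
  set G := P.indicator F with hG
  have hGm : Measurable G := hF.indicator hm
  have hsn : Measurable (fun p : ℝ × (Fin n → ℝ) => (Fin.snoc p.2 p.1 : Fin (n+1) → ℝ)) := by
    refine measurable_pi_iff.2 (fun i => ?_)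
    refine Fin.lastCases ?_ (fun i => ?_) i
    · simp only [Fin.snoc_last]; fun_prop
    · simp only [Fin.snoc_castSucc]; fun_prop
  have key : ∀ (s : ℝ) (u : Fin n → ℝ),
      (Fin.snoc (s • u) (s - ∑ j, (s • u) j) : Fin (n+1) → ℝ) = s • fillMap (n+1) u := by
    intro s u
    ext i
    refine Fin.lastCases ?_ (fun i => ?_) i
    · simp [fill_apply_last, mul_sub, Finset.mul_sum]
    · simp [fill_apply_castSucc]
  rw [← lintegral_indicator hm]
  have h1 : ∫⁻ y, G y = ∫⁻ p : ℝ × (Fin n → ℝ), G (Fin.snoc p.2 p.1) := by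
    have := (volume_preserving_piFinSuccAbove (fun _ : Fin (n + 1) => ℝ) (Fin.last n)).symm.lintegral_comp hGm
    rw [← this]
    refine lintegral_congr (fun p => ?_)
    congr 1
    simp [MeasurableEquiv.piFinSuccAbove, Fin.insertNthEquiv]
  have hGs : Measurable (fun p : ℝ × (Fin n → ℝ) => G (Fin.snoc p.2 p.1)) := hGm.comp hsn
  rw [h1, Measure.volume_eq_prod, lintegral_prod_symm _ hGs.aemeasurable]
  have h2 : ∀ v : Fin n → ℝ, ∫⁻ w : ℝ, G (Fin.snoc v w) = ∫⁻ s : ℝ, G (Fin.snoc v (s - ∑ j, v j)) := by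
    intro v
    exact (lintegral_sub_right_eq_self (fun w : ℝ => G (Fin.snoc v w)) (∑ j, v j)).symm
  simp only [h2]
  have hm2 : Measurable (fun p : (Fin n → ℝ) × ℝ => G (Fin.snoc p.1 (p.2 - ∑ j, p.1 j))) :=
    hGm.comp (hsn.comp (g := fun p : ℝ × (Fin n → ℝ) => (Fin.snoc p.2 p.1 : Fin (n+1) → ℝ))
      (f := fun p : (Fin n → ℝ) × ℝ => (p.2 - ∑ j, p.1 j, p.1)) (by fun_prop))
  rw [lintegral_lintegral_swap hm2.aemeasurable]
  have h3 : ∀ s : ℝ, ∫⁻ v : Fin n → ℝ, G (Fin.snoc v (s - ∑ j, v j))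
      = (Set.Ioi (0:ℝ)).indicator (fun s => ∫⁻ u : Fin n → ℝ, ENNReal.ofReal (s ^ n) * G (s • fillMap (n+1) u)) s := by
    intro s
    by_cases hs : 0 < s
    · rw [Set.indicator_of_mem (by exact hs), lint_scale n s hs, lintegral_const_mul']
      · simp only [key]
      · exact ENNReal.ofReal_ne_top
    · rw [Set.indicator_of_notMem (by exact hs)]
      rw [lintegral_eq_zero_of_ae_eq_zero]
      refine Filter.Eventually.of_forall (fun v => ?_)
      refine Set.indicator_of_notMem (fun hv => hs ?_) _
      have hv : ∀ i, 0 < (Fin.snoc v (s - ∑ j, v j) : Fin (n+1) → ℝ) i := hv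
      have a := hv (Fin.last n)
      rw [Fin.snoc_last] at a
      have b : 0 ≤ ∑ j, v j := Finset.sum_nonneg (fun j _ => by
        have := hv j.castSucc
        rw [Fin.snoc_castSucc] at this; exact this.le)
      linarith
  simp only [h3]
  rw [lintegral_indicator measurableSet_Ioi, lintegral_lintegral_swap, ← lintegral_indicator hmn]
  · refine lintegral_congr (fun u => ?_)
    by_cases hu : u ∈ {u : Fin n → ℝ | (∀ j, 0 < u j) ∧ ∑ j, u j < 1}
    · rw [Set.indicator_of_mem hu]
      refine setLIntegral_congr_fun measurableSet_Ioi (fun r hr => ?_)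
      have hr : 0 < r := hr
      congr 1
      refine Set.indicator_of_mem ?_ _
      show ∀ i, 0 < (r • fillMap (n+1) u) i
      intro i
      refine Fin.lastCases ?_ (fun i => ?_) i
      · simp only [Pi.smul_apply, fill_apply_last, smul_eq_mul]
        exact mul_pos hr (by linarith [hu.2])
      · simp only [Pi.smul_apply, fill_apply_castSucc, smul_eq_mul]
        exact mul_pos hr (hu.1 i)
    · rw [Set.indicator_of_notMem hu, lintegral_eq_zero_of_ae_eq_zero]
      filter_upwards [ae_restrict_mem measurableSet_Ioi] with r hr
      have hr : 0 < r := hr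
      simp only [Pi.zero_apply]
      rw [hG, Set.indicator_of_notMem, mul_zero]
      intro h
      have h : ∀ i, 0 < (r • fillMap (n+1) u) i := h
      refine hu ⟨fun j => ?_, ?_⟩
      · have := h j.castSucc
        simp only [Pi.smul_apply, fill_apply_castSucc, smul_eq_mul] at this
        exact (mul_pos_iff_of_pos_left hr).1 this
      · have := h (Fin.last n)
        simp only [Pi.smul_apply, fill_apply_last, smul_eq_mul] at this
        linarith [(mul_pos_iff_of_pos_left hr).1 this]
  · have : Measurable (fun p : ℝ × (Fin n → ℝ) => ENNReal.ofReal (p.1 ^ n) * G (p.1 • fillMap (n+1) p.2)) := by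
      refine Measurable.mul (by fun_prop) (hGm.comp ?_)
      exact measurable_fst.smul ((fill_measurable n).comp measurable_snd)
    exact this.aemeasurable

/-- The density times a monomial in the normalised coordinates. -/
noncomputable def momFun (K : ℕ) (β : Fin K → ℝ) (τ : ℝ) (m : Fin K → ℕ) (x : Fin K → ℝ) : ℝ :=
  concreteDensity K β τ x * ∏ i, (β i / (kfun K β τ x * x i ^ τ)) ^ (m i)

lemma kfun_measurable (K : ℕ) (β : Fin K → ℝ) (τ : ℝ) : Measurable (kfun K β τ) := by
  unfold kfun; fun_prop

lemma density_measurable (K : ℕ) (β : Fin K → ℝ) (τ : ℝ) :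
    Measurable (concreteDensity K β τ) := by
  unfold concreteDensity; fun_prop

lemma momFun_measurable (K : ℕ) (β : Fin K → ℝ) (τ : ℝ) (m : Fin K → ℕ) :
    Measurable (momFun K β τ m) := by
  have := kfun_measurable K β τ
  have := density_measurable K β τ
  unfold momFun; fun_prop

lemma kfun_pos (n : ℕ) (β : Fin (n+1) → ℝ) (hβ : ∀ i, 0 < β i) (τ : ℝ)
    (x : Fin (n+1) → ℝ) (hx : ∀ i, 0 < x i) : 0 < kfun (n+1) β τ x := by
  unfold kfun
  refine Finset.sum_pos (fun i _ => ?_) Finset.univ_nonempty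
  exact div_pos (hβ i) (Real.rpow_pos_of_pos (hx i) _)

lemma momFun_nonneg (n : ℕ) (β : Fin (n+1) → ℝ) (hβ : ∀ i, 0 < β i) (τ : ℝ) (hτ : 0 < τ)
    (m : Fin (n+1) → ℕ)
    (x : Fin (n+1) → ℝ) (hx : ∀ i, 0 < x i) : 0 ≤ momFun (n+1) β τ m x := by
  have hk := kfun_pos n β hβ τ x hx
  unfold momFun concreteDensity
  have hk' : 0 < ∑ j, β j / x j ^ τ := hk
  have h1 : 0 ≤ ∏ i, β i / x i ^ (τ + 1) := Finset.prod_nonneg (fun i _ =>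
    (div_pos (hβ i) (Real.rpow_pos_of_pos (hx i) _)).le)
  have h2 : 0 ≤ ∏ i, (β i / (kfun (n+1) β τ x * x i ^ τ)) ^ (m i) :=
    Finset.prod_nonneg (fun i _ => pow_nonneg
      (div_pos (hβ i) (mul_pos hk (Real.rpow_pos_of_pos (hx i) _))).le _)
  positivity

lemma scale_identity (n : ℕ) (β : Fin (n+1) → ℝ) (hβ : ∀ i, 0 < β i) (τ : ℝ)
    (m : Fin (n+1) → ℕ)
    (x : Fin (n+1) → ℝ) (hx : ∀ i, 0 < x i) (r : ℝ) (hr : 0 < r) :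
    r ^ n * ((n.factorial : ℝ) * τ ^ n *
      ∏ i, (β i / (r • x) i ^ (τ + 1) * Real.exp (-(β i / (r • x) i ^ τ)) * (β i / (r • x) i ^ τ) ^ (m i)))
    = momFun (n+1) β τ m x * (kfun (n+1) β τ x / r ^ (τ + 1) *
        Real.exp (-(kfun (n+1) β τ x / r ^ τ)) * (kfun (n+1) β τ x / r ^ τ) ^ (n + ∑ i, m i)) := by
  have hk := kfun_pos n β hβ τ x hx
  have hR : 0 < r ^ τ := Real.rpow_pos_of_pos hr _
  have e1 : ∀ i, β i / (r • x) i ^ (τ + 1) = β i / x i ^ (τ+1) * (r ^ τ * r)⁻¹ := by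
    intro i
    rw [Pi.smul_apply, smul_eq_mul, Real.mul_rpow hr.le (hx i).le, Real.rpow_add_one hr.ne']
    have := Real.rpow_pos_of_pos (hx i) (τ+1)
    field_simp
  have e2 : ∀ i, β i / (r • x) i ^ τ = β i / x i ^ τ * (r ^ τ)⁻¹ := by
    intro i
    rw [Pi.smul_apply, smul_eq_mul, Real.mul_rpow hr.le (hx i).le]
    have := Real.rpow_pos_of_pos (hx i) τ
    field_simp
  have e3 : ∀ i, (β i / (kfun (n+1) β τ x * x i ^ τ)) ^ (m i)
      = (β i / x i ^ τ) ^ (m i) * (kfun (n+1) β τ x)⁻¹ ^ (m i) := by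
    intro i
    rw [← mul_pow]
    have := Real.rpow_pos_of_pos (hx i) τ
    congr 1
    field_simp
  have e4 : ∏ i, Real.exp (-(β i / x i ^ τ * (r ^ τ)⁻¹)) = Real.exp (-(kfun (n+1) β τ x / r ^ τ)) := by
    rw [← Real.exp_sum, Finset.sum_neg_distrib, ← Finset.sum_mul]
    rfl
  have e5 : concreteDensity (n+1) β τ x = (n.factorial : ℝ) * τ ^ n * (kfun (n+1) β τ x ^ (n+1))⁻¹ *
      ∏ i, β i / x i ^ (τ + 1) := by
    rw [← Real.rpow_natCast (kfun (n+1) β τ x), ← Real.rpow_neg hk.le]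
    rfl
  unfold momFun
  simp only [e1, e2, e3, e5, mul_pow, Finset.prod_mul_distrib, e4, Finset.prod_pow_eq_pow_sum,
    Finset.prod_const, Finset.card_univ, Fintype.card_fin]
  rw [Real.rpow_add_one hr.ne']
  generalize kfun (n+1) β τ x = k at *
  generalize r ^ τ = R at *
  generalize Real.exp _ = E
  generalize ∏ i, β i / x i ^ (τ + 1) = A
  generalize ∏ i, (β i / x i ^ τ) ^ (m i) = B
  generalize ∑ i, m i = M
  simp only [inv_pow, div_pow]
  field_simp
  ring

lemma fill_pos (n : ℕ) (u : Fin n → ℝ) (hu : (∀ j, 0 < u j) ∧ ∑ j, u j < 1) :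
    ∀ i, 0 < fillMap (n+1) u i := by
  intro i
  refine Fin.lastCases ?_ (fun i => ?_) i
  · rw [fill_apply_last]; linarith [hu.2]
  · rw [fill_apply_castSucc]; exact hu.1 i

lemma measurableSet_openSimplex (n : ℕ) :
    MeasurableSet {u : Fin n → ℝ | (∀ j, 0 < u j) ∧ ∑ j, u j < 1} := by
  refine MeasurableSet.inter (s₁ := {u : Fin n → ℝ | ∀ j, 0 < u j}) (s₂ := {u : Fin n → ℝ | ∑ j, u j < 1}) ?_ ?_
  · have hset : {y : Fin n → ℝ | ∀ i, 0 < y i} = Set.univ.pi (fun _ => Set.Ioi (0:ℝ)) := by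
      ext; simp
    rw [hset]; exact MeasurableSet.univ_pi (fun _ => measurableSet_Ioi)
  · exact measurableSet_lt (by fun_prop) measurable_const

lemma moment_lint (n : ℕ) (β : Fin (n+1) → ℝ) (hβ : ∀ i, 0 < β i) (τ : ℝ) (hτ : 0 < τ)
    (m : Fin (n+1) → ℕ) :
    ∫⁻ u in {u : Fin n → ℝ | (∀ j, 0 < u j) ∧ ∑ j, u j < 1},
      ENNReal.ofReal (momFun (n+1) β τ m (fillMap (n+1) u))
    = ENNReal.ofReal ((n.factorial : ℝ) * (∏ i, ((m i).factorial : ℝ)) / ((n + ∑ i, m i).factorial : ℝ)) := by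
  have hp := polar n (fun y => ENNReal.ofReal ((n.factorial : ℝ) * τ ^ n) * ENNReal.ofReal
      (∏ i, (β i / y i ^ (τ + 1) * Real.exp (-(β i / y i ^ τ)) * (β i / y i ^ τ) ^ (m i))))
      (by fun_prop)
  rw [lintegral_const_mul' _ _ ENNReal.ofReal_ne_top, prodD_lint (n+1) τ hτ β hβ m] at hp
  have h1 : ∫⁻ u in {u : Fin n → ℝ | (∀ j, 0 < u j) ∧ ∑ j, u j < 1},
      ∫⁻ r in Set.Ioi (0:ℝ), ENNReal.ofReal (r ^ n) * (ENNReal.ofReal ((n.factorial : ℝ) * τ ^ n) * ENNReal.ofReal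
      (∏ i, (β i / (r • fillMap (n+1) u) i ^ (τ + 1) * Real.exp (-(β i / (r • fillMap (n+1) u) i ^ τ)) * (β i / (r • fillMap (n+1) u) i ^ τ) ^ (m i))))
      = ∫⁻ u in {u : Fin n → ℝ | (∀ j, 0 < u j) ∧ ∑ j, u j < 1},
      ENNReal.ofReal (momFun (n+1) β τ m (fillMap (n+1) u)) *
        ENNReal.ofReal (((n + ∑ i, m i).factorial : ℝ) / τ) := by
    refine setLIntegral_congr_fun (measurableSet_openSimplex n) (fun u hu => ?_)
    have hx := fill_pos n u hu
    rw [← oneD_lint τ hτ _ (kfun_pos n β hβ τ _ hx) (n + ∑ i, m i),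
      ← lintegral_const_mul' _ _ ENNReal.ofReal_ne_top]
    refine setLIntegral_congr_fun measurableSet_Ioi (fun r hr => ?_)
    have hr : 0 < r := hr
    rw [← ENNReal.ofReal_mul (by positivity), ← ENNReal.ofReal_mul (by positivity),
      ← ENNReal.ofReal_mul (momFun_nonneg n β hβ τ hτ m _ hx),
      scale_identity n β hβ τ m _ hx r hr]
  rw [h1, lintegral_mul_const' _ _ ENNReal.ofReal_ne_top, ← ENNReal.ofReal_mul (by positivity)] at hp
  have hc : (0:ℝ) < ((n + ∑ i, m i).factorial : ℝ) / τ := by positivity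
  rw [← ENNReal.mul_left_inj (ENNReal.ofReal_pos.2 hc).ne' ENNReal.ofReal_ne_top, ← hp,
    ← ENNReal.ofReal_mul (by positivity)]
  congr 1
  rw [Finset.prod_div_distrib]
  simp only [Finset.prod_const, Finset.card_univ, Fintype.card_fin]
  field_simp
  ring

lemma simplex_ae (n : ℕ) :
    (volume : Measure (Fin n → ℝ)).restrict {u : Fin n → ℝ | (∀ j, 0 ≤ u j) ∧ ∑ j, u j ≤ 1}
      = volume.restrict {u : Fin n → ℝ | (∀ j, 0 < u j) ∧ ∑ j, u j < 1} := by
  refine Measure.restrict_congr_set ?_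
  have h0 : ∀ j : Fin n, ∀ᵐ u : Fin n → ℝ, u j ≠ 0 := by
    intro j
    have := (Measure.addHaar_affineSubspace (volume : Measure (Fin n → ℝ))
      (LinearMap.ker (LinearMap.proj (R := ℝ) (φ := fun _ : Fin n => ℝ) j)).toAffineSubspace ?_)
    · refine measure_mono_null (fun u hu => ?_) this
      simpa using hu
    · intro h
      have h2 : (fun _ => (1:ℝ)) ∈ (LinearMap.ker (LinearMap.proj (R := ℝ) (φ := fun _ : Fin n => ℝ) j)).toAffineSubspace := by
        rw [h]; trivial
      simp at h2
  have h1 : ∀ᵐ u : Fin n → ℝ, ∑ j, u j ≠ 1 := by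
    have := (Measure.addHaar_affineSubspace (volume : Measure (Fin n → ℝ))
      ((AffineSubspace.mk' (1:ℝ) (⊥ : Submodule ℝ ℝ)).comap
        (∑ j, LinearMap.proj (R := ℝ) (φ := fun _ : Fin n => ℝ) j).toAffineMap) ?_)
    · refine measure_mono_null (fun u hu => ?_) this
      have hu : ∑ j, u j = 1 := by simpa using hu
      simp [hu]
    · intro h
      have h2 : (0 : Fin n → ℝ) ∈ ((AffineSubspace.mk' (1:ℝ) (⊥ : Submodule ℝ ℝ)).comap
        (∑ j, LinearMap.proj (R := ℝ) (φ := fun _ : Fin n => ℝ) j).toAffineMap) := by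
        rw [h]; trivial
      simp at h2
  filter_upwards [ae_all_iff.2 h0, h1] with u hu0 hu1
  refine propext ⟨fun h => ⟨fun j => lt_of_le_of_ne (h.1 j) (hu0 j).symm, lt_of_le_of_ne h.2 hu1⟩,
    fun h => ⟨fun j => (h.1 j).le, h.2.le⟩⟩

lemma moment (n : ℕ) (β : Fin (n+1) → ℝ) (hβ : ∀ i, 0 < β i) (τ : ℝ) (hτ : 0 < τ)
    (m : Fin (n+1) → ℕ) :
    Integrable (momFun (n+1) β τ m) (simplexMeasure (n+1)) ∧
    ∫ x, momFun (n+1) β τ m x ∂(simplexMeasure (n+1)) =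
      (n.factorial : ℝ) * (∏ i, ((m i).factorial : ℝ)) / ((n + ∑ i, m i).factorial : ℝ) := by
  have hms := momFun_measurable (n+1) β τ m
  have hμ : simplexMeasure (n+1) = Measure.map (fun u : Fin n → ℝ => fillMap (n+1) u)
      (volume.restrict {u : Fin n → ℝ | (∀ j, 0 < u j) ∧ ∑ j, u j < 1}) := by
    rw [← simplex_ae n]; rfl
  have hl : ∫⁻ x, ENNReal.ofReal (momFun (n+1) β τ m x) ∂(simplexMeasure (n+1)) =
      ENNReal.ofReal ((n.factorial : ℝ) * (∏ i, ((m i).factorial : ℝ)) / ((n + ∑ i, m i).factorial : ℝ)) := by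
    rw [hμ, lintegral_map hms.ennreal_ofReal (fill_measurable n), moment_lint n β hβ τ hτ m]
  have hnn : 0 ≤ᵐ[simplexMeasure (n+1)] momFun (n+1) β τ m := by
    rw [hμ]
    refine (ae_map_iff (fill_measurable n).aemeasurable (measurableSet_le measurable_const hms)).2 ?_
    filter_upwards [ae_restrict_mem (measurableSet_openSimplex n)] with u hu
    exact momFun_nonneg n β hβ τ hτ m _ (fill_pos n u hu)
  have hint : Integrable (momFun (n+1) β τ m) (simplexMeasure (n+1)) := by
    refine ⟨hms.aestronglyMeasurable, ?_⟩
    rw [hasFiniteIntegral_iff_ofReal hnn, hl]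
    exact ENNReal.ofReal_lt_top
  refine ⟨hint, ?_⟩
  rw [integral_eq_lintegral_of_nonneg_ae hnn hms.aestronglyMeasurable, hl, ENNReal.toReal_ofReal]
  positivity

lemma prod_pow_single_one {K : ℕ} (p : Fin K → ℝ) (i : Fin K) :
    ∏ l, p l ^ ((Pi.single i 1 : Fin K → ℕ) l) = p i := by
  rw [Finset.prod_eq_single i]
  · simp
  · intro l _ hl; simp [hl]
  · simp

lemma fact_two {K : ℕ} (i j : Fin K) :
    ∏ l, ((((Pi.single i 1 + Pi.single j 1 : Fin K → ℕ) l).factorial : ℕ) : ℝ) = 1 + kd i j := by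
  rw [Finset.prod_eq_single i]
  · by_cases h : i = j
    · subst h; simp [kd]; norm_num
    · simp [kd, h]
  · intro l _ hl
    by_cases h : l = j
    · subst h; simp [hl]
    · simp [hl, h]
  · simp

lemma fact_one {K : ℕ} (i : Fin K) :
    ∏ l, ((((Pi.single i 1 : Fin K → ℕ) l).factorial : ℕ) : ℝ) = 1 := by
  refine Finset.prod_eq_one (fun l _ => ?_)
  by_cases h : l = i
  · subst h; simp
  · simp [h]

/-- The β–β component of the Fisher information of the Concrete distribution in score
form: `E[(∂log f/∂β_i)(∂log f/∂β_j)] = (K δ_ij − 1)/((K+1) β_i β_j)`. -/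
theorem concrete_fisher_beta_beta_score
    (K : ℕ) (hK : 2 ≤ K) (τ : ℝ) (hτ : 0 < τ)
    (β : Fin K → ℝ) (hβ : ∀ i, 0 < β i) (i j : Fin K) :
    ∫ x, concreteDensity K β τ x *
          ((1 / β i - (K : ℝ) / (kfun K β τ x * x i ^ τ)) *
            (1 / β j - (K : ℝ) / (kfun K β τ x * x j ^ τ)))
        ∂(simplexMeasure K)
      = ((K : ℝ) * kd i j - 1) / (((K : ℝ) + 1) * β i * β j) := by
  obtain ⟨n, rfl⟩ : ∃ n, K = n + 1 := ⟨K - 1, by omega⟩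
  obtain ⟨i0, v0⟩ := moment n β hβ τ hτ 0
  obtain ⟨i1, v1⟩ := moment n β hβ τ hτ (Pi.single i 1)
  obtain ⟨i2, v2⟩ := moment n β hβ τ hτ (Pi.single j 1)
  obtain ⟨i3, v3⟩ := moment n β hβ τ hτ (Pi.single i 1 + Pi.single j 1)
  rw [fact_one] at v1 v2
  rw [fact_two] at v3
  have hbi := (hβ i).ne'
  have hbj := (hβ j).ne'
  have hpt : ∀ x, concreteDensity (n+1) β τ x *
          ((1 / β i - ((n+1 : ℕ) : ℝ) / (kfun (n+1) β τ x * x i ^ τ)) *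
            (1 / β j - ((n+1 : ℕ) : ℝ) / (kfun (n+1) β τ x * x j ^ τ)))
      = (1 / (β i * β j)) * (momFun (n+1) β τ 0 x - ((n:ℝ)+1) * momFun (n+1) β τ (Pi.single i 1) x
        - ((n:ℝ)+1) * momFun (n+1) β τ (Pi.single j 1) x
        + ((n:ℝ)+1)^2 * momFun (n+1) β τ (Pi.single i 1 + Pi.single j 1) x) := by
    intro x
    unfold momFun
    simp only [Pi.add_apply, pow_add, Finset.prod_mul_distrib, prod_pow_single_one, Pi.zero_apply,
      pow_zero, Finset.prod_const_one, div_eq_mul_inv, mul_inv]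
    push_cast
    generalize (kfun (n+1) β τ x)⁻¹ = k
    generalize (x i ^ τ)⁻¹ = a
    generalize (x j ^ τ)⁻¹ = b
    field_simp
    ring
  simp only [hpt]
  have j1 : Integrable (fun x => momFun (n+1) β τ 0 x - ((n:ℝ)+1) * momFun (n+1) β τ (Pi.single i 1) x)
      (simplexMeasure (n+1)) := i0.sub (i1.const_mul _)
  have j2 : Integrable (fun x => momFun (n+1) β τ 0 x - ((n:ℝ)+1) * momFun (n+1) β τ (Pi.single i 1) x
      - ((n:ℝ)+1) * momFun (n+1) β τ (Pi.single j 1) x)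
      (simplexMeasure (n+1)) := j1.sub (i2.const_mul _)
  rw [integral_const_mul, integral_add j2 (i3.const_mul _),
    integral_sub j1 (i2.const_mul _), integral_sub i0 (i1.const_mul _),
    integral_const_mul, integral_const_mul, integral_const_mul, v0, v1, v2, v3]
  simp only [Pi.add_apply, Finset.sum_add_distrib, Finset.sum_pi_single', Pi.zero_apply,
    Finset.sum_const_zero, Finset.mem_univ, if_true, Nat.factorial_zero, Nat.cast_one, Finset.prod_const_one]
  simp only [Nat.add_zero, Nat.factorial_succ, ← Nat.add_assoc]
  have hf : (n.factorial : ℝ) ≠ 0 := by positivity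
  push_cast
  field_simp
  ring
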